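/- Let p: ℝⁿ → [1,∞) be a measurable function satisfying 1 < p_- := ess inf p and p_+ := ess sup p < ∞. Then for every f ∈ L^{p(·)}(ℝⁿ), ‖f‖_{L^{p(·)}} ≤ ‖f‖⁰_{L^{p(·)}} ≤ r_p ‖f‖_{L^{p(·)}}, where r_p := 1 + 1/p_- − 1/p_+; i.e., the Orlicz-type norm and the Luxemburg–Nakano norm on L^{p(·)}(ℝⁿ) are equivalent with these explicit constants. -/

import Mathlib

/-!
Both inequalities rest on the pointwise Young inequality and its equality case.

*Upper bound* (`lintegral_mul_le`). If the modulars of `f / λ` and `g / μ` are at most `1`, Young's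
inequality with the exponents `p x`, `p' x`, together with `1 / p x ≤ 1 / p₋` and
`1 / p' x = 1 - 1 / p x ≤ 1 - 1 / p₊`, bounds `∫ |f g|` by `r_p λ μ`; then `μ` and `λ` are
decreased to the norms of `g` and `f`.

*Lower bound* (`modular_le_one`). Let `λ > ‖f‖⁰` and suppose that the modular `a` of `f / λ` exceeds
`1`; it is finite because `p` is essentially bounded. The function `g = (|f| / λ) ^ (p - 1) / a`
satisfies `∫ |g| ^ p' ≤ a⁻¹ ∫ (|f| / λ) ^ p = 1`, since `p' ≥ 1 < a`, while `∫ |f g| = λ`. Hence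
`λ ≤ ‖f‖⁰`, a contradiction.
-/

open MeasureTheory ENNReal Filter Set Topology

noncomputable section

namespace VarExp

/-- Euclidean space ℝⁿ. -/
abbrev E (n : ℕ) := EuclideanSpace ℝ (Fin n)

/-- An axis-parallel cube in ℝⁿ. -/
def IsCube {n : ℕ} (Q : Set (E n)) : Prop :=
  ∃ (a : E n) (h : ℝ), 0 < h ∧ Q = {x : E n | ∀ i, a i ≤ x i ∧ x i ≤ a i + h}

/-- The average of `f` over a set `Q` (w.r.t. Lebesgue measure). -/
def cubeAvg {n : ℕ} (Q : Set (E n)) (f : E n → ℝ) : ℝ :=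
  (volume Q).toReal⁻¹ * ∫ x in Q, f x

/-- The BMO seminorm `‖b‖_* = sup_Q |Q|⁻¹ ∫_Q |b - b_Q|`. -/
def bmoNorm {n : ℕ} (b : E n → ℝ) : ℝ≥0∞ :=
  ⨆ (Q : Set (E n)) (_ : IsCube Q),
    (∫⁻ x in Q, ENNReal.ofReal |b x - cubeAvg Q b|) / volume Q

/-- `b ∈ BMO(ℝⁿ)`. -/
def MemBMO {n : ℕ} (b : E n → ℝ) : Prop :=
  LocallyIntegrable b volume ∧ bmoNorm b < ⊤

/-- Hardy-Littlewood maximal function (over axis-parallel cubes) of an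
`ℝ≥0∞`-valued function. -/
def emaximal {n : ℕ} (f : E n → ℝ≥0∞) (x : E n) : ℝ≥0∞ :=
  ⨆ (Q : Set (E n)) (_ : IsCube Q ∧ x ∈ Q), (∫⁻ y in Q, f y) / volume Q

/-- Hardy-Littlewood maximal function of a real function. -/
def maximal {n : ℕ} (f : E n → ℝ) : E n → ℝ≥0∞ :=
  emaximal (fun y => ENNReal.ofReal |f y|)

/-- Luxemburg-Nakano norm of an `ℝ≥0∞`-valued function for a variable exponent `p`. -/
def eLux {n : ℕ} (p : E n → ℝ) (f : E n → ℝ≥0∞) : ℝ≥0∞ :=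
  sInf {lam : ℝ≥0∞ | lam ≠ 0 ∧ ∫⁻ x, (f x / lam) ^ (p x) ≤ 1}

/-- Luxemburg-Nakano norm `‖f‖_{L^{p(·)}}` of a real function. -/
def vNorm {n : ℕ} (p : E n → ℝ) (f : E n → ℝ) : ℝ≥0∞ :=
  eLux p (fun x => ENNReal.ofReal |f x|)

/-- Membership `f ∈ L^{p(·)}(ℝⁿ)`: the modular of `λf` is finite for some `λ > 0`. -/
def MemVarLp {n : ℕ} (p : E n → ℝ) (f : E n → ℝ) : Prop :=
  AEStronglyMeasurable f volume ∧
    ∃ lam : ℝ, 0 < lam ∧ ∫⁻ x, (ENNReal.ofReal (lam * |f x|)) ^ (p x) < ⊤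

/-- Condition (*): `p` measurable, `1 ≤ p`, `1 < p_- := essinf p` and
`p_+ := esssup p < ∞` (i.e. `p` essentially bounded above). -/
def GoodExp {n : ℕ} (p : E n → ℝ) : Prop :=
  Measurable p ∧ (∀ x, 1 ≤ p x) ∧ 1 < essInf p volume ∧
    ∃ B : ℝ, ∀ᵐ x ∂(volume : Measure (E n)), p x ≤ B

/-- The constant `r_p := 1 + 1/p_- - 1/p_+`. -/
def rp {n : ℕ} (p : E n → ℝ) : ℝ :=
  1 + (essInf p volume)⁻¹ - (essSup p volume)⁻¹

/-- The conjugate exponent `p'(x) = p(x)/(p(x)-1)`. -/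
def conjExp {n : ℕ} (p : E n → ℝ) : E n → ℝ := fun x => p x / (p x - 1)

/-- The class `𝓜(ℝⁿ)`: `p` satisfies (*) and the Hardy-Littlewood maximal operator
is bounded on `L^{p(·)}(ℝⁿ)`. -/
def MemClassM {n : ℕ} (p : E n → ℝ) : Prop :=
  GoodExp p ∧ ∃ c : ℝ≥0∞, c ≠ ⊤ ∧ ∀ f : E n → ℝ, AEStronglyMeasurable f volume →
    eLux p (maximal f) ≤ c * vNorm p f

/-- Bounded measurable functions with compact support. -/
def MemLinftyC {n : ℕ} (f : E n → ℝ) : Prop :=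
  Measurable f ∧ (∃ C : ℝ, ∀ x, |f x| ≤ C) ∧ HasCompactSupport f

/-- The Calderón-Zygmund kernel data: `Ω` is homogeneous of degree zero, infinitely
differentiable away from the origin (equivalently, on the unit sphere), and has
mean value zero over the unit sphere (expressed, via homogeneity, as mean zero
over the annulus `1 ≤ ‖x‖ ≤ 2`). -/
structure IsCZKernel {n : ℕ} (Ω : E n → ℝ) : Prop where
  hom : ∀ (x : E n) (t : ℝ), 0 < t → Ω (t • x) = Ω x
  smooth : ContDiffOn ℝ (⊤ : ℕ∞) Ω {x : E n | x ≠ 0}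
  mean : ∫ x in {x : E n | 1 ≤ ‖x‖ ∧ ‖x‖ ≤ 2}, Ω x = 0

/-- The kernel `K(x) = Ω(x)/|x|ⁿ`. -/
def kernelFn {n : ℕ} (Ω : E n → ℝ) : E n → ℝ := fun x => Ω x / ‖x‖ ^ n

/-- The truncated kernel `K_ε = K·χ_{|y|>ε}`. -/
def kernelEps {n : ℕ} (Ω : E n → ℝ) (ε : ℝ) : E n → ℝ :=
  fun y => if ε < ‖y‖ then kernelFn Ω y else 0

/-- The truncated singular integral `T_ε f(x) = ∫_{|y|>ε} K(y) f(x-y) dy`. -/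
def Teps {n : ℕ} (Ω : E n → ℝ) (ε : ℝ) (f : E n → ℝ) (x : E n) : ℝ :=
  ∫ y in {y : E n | ε < ‖y‖}, kernelFn Ω y * f (x - y)

/-- The principal value singular integral `T f(x) = lim_{ε→0⁺} T_ε f(x)`. -/
def Tsing {n : ℕ} (Ω : E n → ℝ) (f : E n → ℝ) (x : E n) : ℝ :=
  limUnder (𝓝[>] (0 : ℝ)) (fun ε => Teps Ω ε f x)

/-- The commutator `[b,T]f = b·Tf - T(bf)`. -/
def commutator {n : ℕ} (b : E n → ℝ) (Ω : E n → ℝ) (f : E n → ℝ) : E n → ℝ :=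
  fun x => b x * Tsing Ω f x - Tsing Ω (fun y => b y * f y) x

/-- The non-increasing rearrangement `f^*(t)` (ℝ≥0∞-valued, `t ∈ ℝ≥0∞`). -/
def rearr {n : ℕ} (f : E n → ℝ) (t : ℝ≥0∞) : ℝ≥0∞ :=
  sInf {α : ℝ≥0∞ | volume {x : E n | α < ENNReal.ofReal |f x|} ≤ t}

/-- The local sharp maximal function
`M_λ^# f(x) = sup_{Q ∋ x} inf_c ((f-c)χ_Q)^*(λ|Q|)`. -/
def localSharp {n : ℕ} (lam : ℝ) (f : E n → ℝ) (x : E n) : ℝ≥0∞ :=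
  ⨆ (Q : Set (E n)) (_ : IsCube Q ∧ x ∈ Q),
    ⨅ c : ℝ, rearr (Q.indicator (fun y => f y - c)) (ENNReal.ofReal lam * volume Q)

/-- The sharp maximal function
`f_δ^#(x) = sup_{Q ∋ x} inf_c (|Q|⁻¹ ∫_Q |f-c|^δ)^{1/δ}`. -/
def sharpDelta {n : ℕ} (δ : ℝ) (f : E n → ℝ) (x : E n) : ℝ≥0∞ :=
  ⨆ (Q : Set (E n)) (_ : IsCube Q ∧ x ∈ Q),
    ⨅ c : ℝ, ((∫⁻ y in Q, ENNReal.ofReal (|f y - c| ^ δ)) / volume Q) ^ (1 / δ)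

/-- `f ∈ L^δ_loc(ℝⁿ)` (local δ-integrability over cubes). -/
def MemLdeltaLoc {n : ℕ} (δ : ℝ) (f : E n → ℝ) : Prop :=
  AEStronglyMeasurable f volume ∧
    ∀ Q : Set (E n), IsCube Q → ∫⁻ y in Q, ENNReal.ofReal (|f y| ^ δ) < ⊤

/-- `f ∈ L log L(Q)`: `∫_Q |f| log⁺|f| < ∞`. -/
def MemLlogL {n : ℕ} (Q : Set (E n)) (f : E n → ℝ) : Prop :=
  AEStronglyMeasurable f volume ∧
    ∫⁻ x in Q, ENNReal.ofReal (|f x| * Real.log (max |f x| 1)) < ⊤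

/-- `g ∈ L_exp(Q)`: `∫_Q exp(λ|g|) < ∞` for some `λ > 0`. -/
def MemLexp {n : ℕ} (Q : Set (E n)) (g : E n → ℝ) : Prop :=
  AEStronglyMeasurable g volume ∧
    ∃ lam : ℝ, 0 < lam ∧ ∫⁻ x in Q, ENNReal.ofReal (Real.exp (lam * |g x|)) < ⊤

/-- `f^{**}(t) = t⁻¹ ∫_0^t f^*(s) ds`. -/
def starStar {n : ℕ} (f : E n → ℝ) (t : ℝ) : ℝ≥0∞ :=
  (∫⁻ s in Set.Ioc (0 : ℝ) t, rearr f (ENNReal.ofReal s)) / ENNReal.ofReal t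

/-- The Zygmund norm `‖f‖_{L log L(Q)} = ∫_0^{|Q|} (fχ_Q)^{**}(t) dt`. -/
def llogLNorm {n : ℕ} (Q : Set (E n)) (f : E n → ℝ) : ℝ≥0∞ :=
  ∫⁻ t in Set.Ioc (0 : ℝ) (volume Q).toReal, starStar (Q.indicator f) t

/-- The norm `‖g‖_{L_exp(Q)} = sup_{0<t<|Q|} g^{**}(t)/(1 + log(|Q|/t))`. -/
def lexpNorm {n : ℕ} (Q : Set (E n)) (g : E n → ℝ) : ℝ≥0∞ :=
  ⨆ (t : ℝ) (_ : t ∈ Set.Ioo (0 : ℝ) (volume Q).toReal),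
    starStar (Q.indicator g) t / ENNReal.ofReal (1 + Real.log ((volume Q).toReal / t))

/-- The Orlicz-type norm `‖f‖⁰ = sup {∫ |fg| : ‖g‖_{L^{p'(·)}} ≤ 1}`. -/
def orliczNorm {n : ℕ} (p : E n → ℝ) (f : E n → ℝ) : ℝ≥0∞ :=
  ⨆ (g : E n → ℝ) (_ : MemVarLp (conjExp p) g ∧ vNorm (conjExp p) g ≤ 1),
    ∫⁻ x, ENNReal.ofReal |f x * g x|

/-- The associate (Köthe dual) norm of `L^{p(·)}`:
`‖g‖' = sup {∫ |gh| : ‖h‖_{L^{p(·)}} ≤ 1}`. -/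
def assocNorm {n : ℕ} (p : E n → ℝ) (g : E n → ℝ) : ℝ≥0∞ :=
  ⨆ (h : E n → ℝ) (_ : MemVarLp p h ∧ vNorm p h ≤ 1),
    ∫⁻ x, ENNReal.ofReal |g x * h x|

lemma GoodExp.ae_one_lt {n : ℕ} {p : E n → ℝ} (hp : GoodExp p) :
    ∀ᵐ x, 1 < p x := by
  obtain ⟨-, h1, h2, -⟩ := hp
  have hb : IsBoundedUnder (· ≥ ·) (ae (volume : Measure (E n))) p :=
    ⟨1, by simpa using Eventually.of_forall h1⟩
  filter_upwards [ae_essInf_le hb] with x hx using h2.trans_le hx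

lemma GoodExp.ae_mem_Icc {n : ℕ} {p : E n → ℝ} (hp : GoodExp p) :
    ∀ᵐ x, essInf p volume ≤ p x ∧ p x ≤ essSup p volume := by
  obtain ⟨-, h1, h2, B, hB⟩ := hp
  have hb : IsBoundedUnder (· ≥ ·) (ae (volume : Measure (E n))) p :=
    ⟨1, by simpa using Eventually.of_forall h1⟩
  have hb' : IsBoundedUnder (· ≤ ·) (ae (volume : Measure (E n))) p := ⟨B, by simpa using hB⟩
  filter_upwards [ae_essInf_le hb, ae_le_essSup hb'] with x hx hx' using ⟨hx, hx'⟩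

lemma GoodExp.essInf_le_essSup {n : ℕ} {p : E n → ℝ} (hp : GoodExp p) :
    essInf p volume ≤ essSup p volume := by
  obtain ⟨x, hx⟩ := hp.ae_mem_Icc.exists
  exact hx.1.trans hx.2

lemma GoodExp.one_le_rp {n : ℕ} {p : E n → ℝ} (hp : GoodExp p) : 1 ≤ rp p := by
  have h0 : 0 < essInf p volume := zero_lt_one.trans hp.2.2.1
  have := inv_anti₀ h0 hp.essInf_le_essSup
  unfold rp
  linarith

lemma holderConjugate_conjExp {n : ℕ} {p : E n → ℝ} {x : E n} (hx : 1 < p x) :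
    (p x).HolderConjugate (conjExp p x) :=
  Real.HolderConjugate.conjExponent hx

/-- Hölder's inequality in unnormalized form: `λ` and `μ` are any admissible values in the infima
defining the two norms. -/
lemma lintegral_mul_le {n : ℕ} {p : E n → ℝ} (hp : GoodExp p) {f g : E n → ℝ}
    (hf : AEStronglyMeasurable f volume) {l m : ℝ≥0∞} (hl0 : l ≠ 0) (hm0 : m ≠ 0)
    (hl : ∫⁻ x, (ENNReal.ofReal |f x| / l) ^ p x ≤ 1)
    (hm : ∫⁻ x, (ENNReal.ofReal |g x| / m) ^ conjExp p x ≤ 1) :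
    ∫⁻ x, ENNReal.ofReal |f x * g x| ≤ ENNReal.ofReal (rp p) * l * m := by
  have hR0 : ENNReal.ofReal (rp p) ≠ 0 := by
    simpa using zero_lt_one.trans_le hp.one_le_rp
  rcases eq_or_ne l ⊤ with rfl | hlt
  · simp [ENNReal.mul_top hR0, ENNReal.top_mul hm0]
  rcases eq_or_ne m ⊤ with rfl | hmt
  · simp [ENNReal.mul_top (mul_ne_zero hR0 hl0)]
  have hi0 : 0 < essInf p volume := zero_lt_one.trans hp.2.2.1
  have hs1 : 1 < essSup p volume := hp.2.2.1.trans_le hp.essInf_le_essSup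
  have hs_inv : (essSup p volume)⁻¹ ≤ 1 := inv_le_one_of_one_le₀ hs1.le
  have hfac : ∀ x, ENNReal.ofReal |f x * g x| =
      l * m * ((ENNReal.ofReal |f x| / l) * (ENNReal.ofReal |g x| / m)) := by
    intro x
    rw [abs_mul, ENNReal.ofReal_mul (abs_nonneg _), mul_mul_mul_comm,
      ENNReal.mul_div_cancel hl0 hlt, ENNReal.mul_div_cancel hm0 hmt]
  have hpt : ∀ᵐ x, (ENNReal.ofReal |f x| / l) * (ENNReal.ofReal |g x| / m) ≤
      ENNReal.ofReal (essInf p volume)⁻¹ * (ENNReal.ofReal |f x| / l) ^ p x +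
      ENNReal.ofReal (1 - (essSup p volume)⁻¹) * (ENNReal.ofReal |g x| / m) ^ conjExp p x := by
    filter_upwards [hp.ae_one_lt, hp.ae_mem_Icc] with x hx hx'
    have hc := holderConjugate_conjExp hx
    refine (ENNReal.young_inequality _ _ hc).trans ?_
    rw [ENNReal.div_eq_inv_mul (a := _ ^ p x), ENNReal.div_eq_inv_mul (a := _ ^ conjExp p x),
      ← ENNReal.ofReal_inv_of_pos hc.pos,
      ← ENNReal.ofReal_inv_of_pos hc.symm.pos]
    have h1 : (p x)⁻¹ ≤ (essInf p volume)⁻¹ := inv_anti₀ hi0 hx'.1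
    have h2 : (conjExp p x)⁻¹ ≤ 1 - (essSup p volume)⁻¹ := by
      have := inv_anti₀ hc.pos hx'.2
      have := hc.inv_add_inv_eq_one
      linarith
    gcongr
  have hmeas : AEMeasurable (fun x => ENNReal.ofReal (essInf p volume)⁻¹ *
      (ENNReal.ofReal |f x| / l) ^ p x) volume := by
    have h1 : AEMeasurable f volume := hf.aemeasurable
    have h2 : AEMeasurable (fun x => ENNReal.ofReal |f x| / l) volume :=
      (ENNReal.measurable_ofReal.comp_aemeasurable
        (continuous_abs.measurable.comp_aemeasurable h1)).div_const l
    exact (h2.pow hp.1.aemeasurable).const_mul _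
  calc ∫⁻ x, ENNReal.ofReal |f x * g x|
      = l * m * ∫⁻ x, (ENNReal.ofReal |f x| / l) * (ENNReal.ofReal |g x| / m) := by
        simp_rw [hfac]
        exact lintegral_const_mul' _ _ (ENNReal.mul_ne_top hlt hmt)
    _ ≤ l * m * (ENNReal.ofReal (essInf p volume)⁻¹ * 1 +
          ENNReal.ofReal (1 - (essSup p volume)⁻¹) * 1) := by
        gcongr
        refine (lintegral_mono_ae hpt).trans ?_
        rw [lintegral_add_left' hmeas, lintegral_const_mul' _ _ ENNReal.ofReal_ne_top,
          lintegral_const_mul' _ _ ENNReal.ofReal_ne_top]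
        gcongr
    _ = ENNReal.ofReal (rp p) * l * m := by
        rw [mul_one, mul_one, ← ENNReal.ofReal_add (inv_nonneg.2 hi0.le) (by linarith)]
        rw [show (essInf p volume)⁻¹ + (1 - (essSup p volume)⁻¹) = rp p by unfold rp; ring]
        ring

lemma le_mul_sInf {A C : ℝ≥0∞} {S : Set ℝ≥0∞} (hC0 : C ≠ 0) (hC : C ≠ ⊤)
    (h : ∀ s ∈ S, A ≤ C * s) : A ≤ C * sInf S := by
  rw [mul_comm, ← ENNReal.div_le_iff hC0 hC]
  refine le_sInf fun s hs => ?_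
  rw [ENNReal.div_le_iff hC0 hC, mul_comm]
  exact h s hs

lemma orliczNorm_le {n : ℕ} {p : E n → ℝ} (hp : GoodExp p) {f : E n → ℝ}
    (hf : AEStronglyMeasurable f volume) :
    orliczNorm p f ≤ ENNReal.ofReal (rp p) * vNorm p f := by
  have hR0 : ENNReal.ofReal (rp p) ≠ 0 := by
    simpa using zero_lt_one.trans_le hp.one_le_rp
  refine iSup₂_le fun g hg => ?_
  refine le_mul_sInf hR0 ENNReal.ofReal_ne_top ?_
  rintro l ⟨hl0, hl⟩
  rcases eq_or_ne l ⊤ with rfl | hlt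
  · simp [ENNReal.mul_top hR0]
  calc ∫⁻ x, ENNReal.ofReal |f x * g x|
      ≤ ENNReal.ofReal (rp p) * l * vNorm (conjExp p) g :=
        le_mul_sInf (mul_ne_zero hR0 hl0) (ENNReal.mul_ne_top ENNReal.ofReal_ne_top hlt)
          fun m hm => lintegral_mul_le hp hf hl0 hm.1 hl hm.2
    _ ≤ ENNReal.ofReal (rp p) * l * 1 := by gcongr; exact hg.2
    _ = ENNReal.ofReal (rp p) * l := mul_one _

/-- Essential boundedness of `p` makes the modular finite at every scale, not just at one. -/
lemma modular_lt_top {n : ℕ} {p : E n → ℝ} (hp : GoodExp p) {f : E n → ℝ} (hf : MemVarLp p f)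
    {l : ℝ} (hl : 0 < l) : ∫⁻ x, ENNReal.ofReal (|f x| / l) ^ p x < ⊤ := by
  obtain ⟨-, c, hc, hfin⟩ := hf
  obtain ⟨-, h1, -, B, hB⟩ := hp
  set K : ℝ≥0∞ := ENNReal.ofReal (max 1 (1 / (l * c))) with hK
  have hK1 : 1 ≤ K := by
    rw [hK, ← ENNReal.ofReal_one]
    exact ENNReal.ofReal_le_ofReal (le_max_left _ _)
  have hB0 : 0 ≤ B := by
    obtain ⟨x, hx⟩ := hB.exists
    linarith [h1 x]
  have hKB : K ^ B ≠ ⊤ := ENNReal.rpow_ne_top_of_nonneg hB0 ENNReal.ofReal_ne_top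
  have hle : ∀ᵐ x, ENNReal.ofReal (|f x| / l) ^ p x ≤
      K ^ B * ENNReal.ofReal (c * |f x|) ^ p x := by
    filter_upwards [hB] with x hx
    have hp0 : 0 ≤ p x := zero_le_one.trans (h1 x)
    have h2 : ENNReal.ofReal (|f x| / l) ≤ K * ENNReal.ofReal (c * |f x|) := by
      rw [hK, ← ENNReal.ofReal_mul (by positivity)]
      refine ENNReal.ofReal_le_ofReal ?_
      calc |f x| / l = 1 / (l * c) * (c * |f x|) := by field_simp
        _ ≤ _ := by gcongr; exact le_max_right _ _
    calc ENNReal.ofReal (|f x| / l) ^ p x ≤ (K * ENNReal.ofReal (c * |f x|)) ^ p x :=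
          ENNReal.rpow_le_rpow h2 hp0
      _ = K ^ p x * ENNReal.ofReal (c * |f x|) ^ p x := ENNReal.mul_rpow_of_nonneg _ _ hp0
      _ ≤ _ := by gcongr
  refine (lintegral_mono_ae hle).trans_lt ?_
  rw [lintegral_const_mul' _ _ hKB]
  exact ENNReal.mul_lt_top hKB.lt_top hfin

lemma modular_le_one {n : ℕ} {p : E n → ℝ} (hp : GoodExp p) {f : E n → ℝ} (hf : MemVarLp p f)
    {l : ℝ} (hl : 0 < l) (hlN : orliczNorm p f < ENNReal.ofReal l) :
    ∫⁻ x, ENNReal.ofReal (|f x| / l) ^ p x ≤ 1 := by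
  by_contra! ha
  have hfin := modular_lt_top hp hf hl
  set A := ∫⁻ x, ENNReal.ofReal (|f x| / l) ^ p x with hA
  set a := A.toReal with ha_def
  have hAa : A = ENNReal.ofReal a := (ENNReal.ofReal_toReal hfin.ne).symm
  have ha1 : 1 < a := by
    rw [hAa] at ha
    simpa using ha
  have ha0 : 0 < a := zero_lt_one.trans ha1
  set g : E n → ℝ := fun x => (|f x| / l) ^ (p x - 1) / a with hg_def
  have hg0 : ∀ x, 0 ≤ g x := fun x => by positivity
  have hnorm : ∫⁻ x, ENNReal.ofReal (a⁻¹) * ENNReal.ofReal (|f x| / l) ^ p x = 1 := by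
    rw [lintegral_const_mul' _ _ ENNReal.ofReal_ne_top, ← hA, hAa,
      ← ENNReal.ofReal_mul (inv_nonneg.2 ha0.le), inv_mul_cancel₀ ha0.ne', ENNReal.ofReal_one]
  have hmod : ∫⁻ x, ENNReal.ofReal |g x| ^ conjExp p x ≤ 1 := by
    rw [← hnorm]
    refine lintegral_mono_ae ?_
    filter_upwards [hp.ae_one_lt] with x hx
    have hc := holderConjugate_conjExp hx
    have hh : 0 ≤ |f x| / l := by positivity
    rw [abs_of_nonneg (hg0 x), ENNReal.ofReal_rpow_of_nonneg (hg0 x) hc.symm.nonneg,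
      ENNReal.ofReal_rpow_of_nonneg hh hc.nonneg, ← ENNReal.ofReal_mul (inv_nonneg.2 ha0.le)]
    refine ENNReal.ofReal_le_ofReal ?_
    have hexp : (p x - 1) * conjExp p x = p x := by
      have : p x - 1 ≠ 0 := by linarith
      unfold conjExp
      field_simp
    have hainv : (a⁻¹) ^ conjExp p x ≤ a⁻¹ := by
      calc (a⁻¹) ^ conjExp p x ≤ (a⁻¹) ^ (1 : ℝ) :=
            Real.rpow_le_rpow_of_exponent_ge (inv_pos.2 ha0) (inv_le_one_of_one_le₀ ha1.le)
              hc.symm.lt.le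
        _ = a⁻¹ := Real.rpow_one _
    rw [hg_def]
    dsimp only
    rw [div_eq_inv_mul, Real.mul_rpow (inv_nonneg.2 ha0.le) (by positivity), ← Real.rpow_mul hh,
      hexp]
    gcongr
  have hgmeas : AEStronglyMeasurable g volume := by
    have h1 : AEMeasurable f volume := hf.1.aemeasurable
    have h2 : AEMeasurable (fun x => |f x| / l) volume :=
      (continuous_abs.measurable.comp_aemeasurable h1).div_const l
    exact ((h2.pow (hp.1.sub_const 1).aemeasurable).div_const a).aestronglyMeasurable
  have hgmem : MemVarLp (conjExp p) g :=
    ⟨hgmeas, 1, one_pos, by simpa using hmod.trans_lt one_lt_top⟩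
  have hgnorm : vNorm (conjExp p) g ≤ 1 := sInf_le ⟨one_ne_zero, by simpa using hmod⟩
  have hint : ∫⁻ x, ENNReal.ofReal |f x * g x| = ENNReal.ofReal l := by
    rw [← mul_one (ENNReal.ofReal l), ← hnorm, ← lintegral_const_mul' _ _ ENNReal.ofReal_ne_top]
    refine lintegral_congr_ae ?_
    filter_upwards [hp.ae_one_lt] with x hx
    have hh : 0 ≤ |f x| / l := by positivity
    have hp0 : 0 ≤ p x := by linarith
    rw [ENNReal.ofReal_rpow_of_nonneg hh hp0, ← ENNReal.ofReal_mul (inv_nonneg.2 ha0.le),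
      ← ENNReal.ofReal_mul hl.le, abs_mul, abs_of_nonneg (hg0 x)]
    congr 1
    have hsplit : (|f x| / l) ^ p x = (|f x| / l) * (|f x| / l) ^ (p x - 1) := by
      rw [← Real.rpow_one_add' hh (by linarith)]
      congr 1
      ring
    rw [hsplit, hg_def]
    field_simp
  refine hlN.not_ge ?_
  rw [← hint]
  exact le_iSup₂ (f := fun (g : E n → ℝ) (_ : MemVarLp (conjExp p) g ∧
    vNorm (conjExp p) g ≤ 1) => ∫⁻ x, ENNReal.ofReal |f x * g x|) g ⟨hgmem, hgnorm⟩

lemma vNorm_le_orliczNorm {n : ℕ} {p : E n → ℝ} (hp : GoodExp p) {f : E n → ℝ}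
    (hf : MemVarLp p f) : vNorm p f ≤ orliczNorm p f := by
  refine le_of_forall_gt_imp_ge_of_dense fun L hL => ?_
  rcases eq_or_ne L ⊤ with rfl | hLt
  · exact le_top
  have hL0 : L ≠ 0 := (zero_le.trans_lt hL).ne'
  have hl : 0 < L.toReal := ENNReal.toReal_pos hL0 hLt
  have hLl : ENNReal.ofReal L.toReal = L := ENNReal.ofReal_toReal hLt
  have := modular_le_one hp hf hl (hLl.symm ▸ hL)
  refine sInf_le ⟨hL0, ?_⟩
  simpa only [ENNReal.ofReal_div_of_pos hl, hLl] using this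

/-- equivalence of the Orlicz-type and Luxemburg–Nakano norms: for `p`
satisfying (*) and `f ∈ L^{p(·)}(ℝⁿ)`,
`‖f‖_{L^{p(·)}} ≤ ‖f‖⁰_{L^{p(·)}} ≤ r_p ‖f‖_{L^{p(·)}}`. -/
theorem statement6 {n : ℕ} (p : E n → ℝ) (hp : GoodExp p)
    (f : E n → ℝ) (hf : MemVarLp p f) :
    vNorm p f ≤ orliczNorm p f ∧ orliczNorm p f ≤ ENNReal.ofReal (rp p) * vNorm p f := by
  exact ⟨vNorm_le_orliczNorm hp hf, orliczNorm_le hp hf.1⟩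

end VarExp
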